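/- Let K be a field, n ≥ 1, let A be a nonempty subset of {1,…,n}, and let R be the quotient of the formal power series ring K[[x, u_1, …, u_n, α]] by the principal ideal generated by α·x − ∏_{i∈A} u_i. Then for every j ∈ {1,…,n}, the ideal of R generated by the residue classes of x and u_j has height 1 if and only if j ∈ A. -/

import Mathlib

/-- The height (codimension) of an ideal `I` of a commutative ring: the infimum of the
heights of the prime ideals containing `I`. -/
noncomputable def idealHeight {R : Type*} [CommRing R] (I : Ideal R) : ℕ∞ :=
  ⨅ (P : PrimeSpectrum R) (_ : I ≤ P.asIdeal), Order.height P

open MvPowerSeries in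
lemma chart_ker_eq {σ K : Type*} [Field K] (a b : σ) :
    RingHom.ker (killCompl (R := K) (Function.Embedding.subtype (fun c : σ => c ≠ a ∧ c ≠ b))) =
      Ideal.span {(X a : MvPowerSeries σ K), X b} := by
  classical
  apply le_antisymm
  · intro f hf
    rw [RingHom.mem_ker] at hf
    have h0 : ∀ m : σ →₀ ℕ, m a = 0 → m b = 0 → coeff m f = 0 := by
      intro m ha hb
      have hm : m ∈ Set.range (Finsupp.embDomain
          (Function.Embedding.subtype (fun c : σ => c ≠ a ∧ c ≠ b))) := by
        rw [Finsupp.mem_range_embDomain_iff]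
        intro c hc
        have hc' : m c ≠ 0 := by simpa using hc
        refine ⟨⟨c, ?_, ?_⟩, rfl⟩
        · rintro rfl; exact hc' ha
        · rintro rfl; exact hc' hb
      obtain ⟨y, rfl⟩ := hm
      rw [← coeff_killCompl, hf, coeff_zero]
    let f1 : MvPowerSeries σ K := fun m => if m a = 0 then 0 else coeff m f
    have hf1 : ∀ m, coeff m f1 = if m a = 0 then 0 else coeff m f := fun m => rfl
    have h1 : (X a : MvPowerSeries σ K) ∣ f1 := by
      rw [X_dvd_iff]; intro m hm; rw [hf1, if_pos hm]
    have h2 : (X b : MvPowerSeries σ K) ∣ f - f1 := by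
      rw [X_dvd_iff]; intro m hm
      rw [map_sub, hf1]
      split_ifs with h
      · rw [h0 m h hm, sub_zero]
      · rw [sub_self]
    have : f = f1 + (f - f1) := by ring
    rw [this]
    apply Ideal.add_mem
    · exact Ideal.mem_of_dvd _ h1 (Ideal.subset_span (by simp))
    · exact Ideal.mem_of_dvd _ h2 (Ideal.subset_span (by simp))
  · rw [Ideal.span_le]
    rintro f (rfl | rfl)
    · exact killCompl_X_eq_zero (by simp)
    · exact killCompl_X_eq_zero (by simp)

open MvPowerSeries in
lemma chart_isPrime {σ K : Type*} [Field K] (a b : σ) :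
    (Ideal.span {(X a : MvPowerSeries σ K), X b}).IsPrime := by
  rw [← chart_ker_eq]
  have : IsDomain (MvPowerSeries {c : σ // c ≠ a ∧ c ≠ b} K) := NoZeroDivisors.to_isDomain _
  exact RingHom.ker_isPrime _

open MvPowerSeries in
lemma chart_mem {σ K : Type*} [Field K] {a b c : σ}
    (h : (X c : MvPowerSeries σ K) ∈ Ideal.span {(X a : MvPowerSeries σ K), X b}) :
    c = a ∨ c = b := by
  by_contra! hc
  rw [← chart_ker_eq, RingHom.mem_ker] at h
  have := killCompl_X (R := K)
    (e := Function.Embedding.subtype (fun c : σ => c ≠ a ∧ c ≠ b)) ⟨c, hc⟩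
  have h' := h.symm.trans this
  have h2 := congrArg (coeff (Finsupp.single ⟨c, hc⟩ 1)) h'
  rw [coeff_index_single_self_X, coeff_zero] at h2
  exact zero_ne_one h2

open MvPowerSeries in
lemma chart_height_two {σ K : Type*} [Field K] {a b : σ} (hab : a ≠ b)
    (P : Ideal (MvPowerSeries σ K)) [P.IsPrime] (ha : X a ∈ P) (hb : X b ∈ P) :
    2 ≤ P.height := by
  have : IsDomain (MvPowerSeries σ K) := NoZeroDivisors.to_isDomain _
  have := chart_isPrime (K := K) a a
  have h1 : Ideal.span {(X a : MvPowerSeries σ K), X a} < P := by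
    refine lt_of_le_of_ne ?_ ?_
    · rw [Ideal.span_le]; rintro f (rfl | rfl) <;> exact ha
    · rintro rfl
      rcases chart_mem hb with h | h <;> exact hab h.symm
  have h0 : (⊥ : Ideal (MvPowerSeries σ K)) < Ideal.span {(X a : MvPowerSeries σ K), X a} := by
    rw [bot_lt_iff_ne_bot]
    intro h
    have : (X a : MvPowerSeries σ K) ∈ Ideal.span {(X a : MvPowerSeries σ K), X a} :=
      Ideal.subset_span (by simp)
    rw [h, Ideal.mem_bot] at this
    have h2 := congrArg (coeff (Finsupp.single a 1)) this
    rw [coeff_index_single_self_X, coeff_zero] at h2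
    exact one_ne_zero h2
  have e0 := Ideal.height_add_one_le_of_lt_of_isPrime h0
  have e1 := Ideal.height_add_one_le_of_lt_of_isPrime h1
  rw [Ideal.height_bot, zero_add] at e0
  calc (2 : ℕ∞) = 1 + 1 := by norm_num
    _ ≤ _ := by gcongr
    _ ≤ _ := e1

open MvPowerSeries in
lemma chart_height_three {σ K : Type*} [Field K] {a b c : σ} (hab : a ≠ b) (hac : c ≠ a)
    (hbc : c ≠ b) (P : Ideal (MvPowerSeries σ K)) [P.IsPrime] (ha : X a ∈ P) (hb : X b ∈ P)
    (hc : X c ∈ P) : 3 ≤ P.height := by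
  have := chart_isPrime (K := K) a b
  have h1 : Ideal.span {(X a : MvPowerSeries σ K), X b} < P := by
    refine lt_of_le_of_ne ?_ ?_
    · rw [Ideal.span_le]; rintro f (rfl | rfl) <;> assumption
    · rintro rfl
      rcases chart_mem hc with h | h <;> contradiction
  have e0 := chart_height_two hab (Ideal.span {(X a : MvPowerSeries σ K), X b})
    (Ideal.subset_span (by simp)) (Ideal.subset_span (by simp))
  have e1 := Ideal.height_add_one_le_of_lt_of_isPrime h1
  calc (3 : ℕ∞) = 2 + 1 := by norm_num
    _ ≤ _ := by gcongr
    _ ≤ _ := e1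

lemma chart_comap_height {S : Type*} [CommRing S] [IsNoetherianRing S] (f : S)
    (Q : Ideal (S ⧸ Ideal.span {f})) [Q.IsPrime] :
    (Q.comap (Ideal.Quotient.mk (Ideal.span {f}))).height ≤ Q.height + 1 := by
  have hf : f ∈ Q.comap (Ideal.Quotient.mk (Ideal.span {f})) := by
    rw [Ideal.mem_comap, Ideal.Quotient.eq_zero_iff_mem.mpr (Ideal.mem_span_singleton_self f)]
    exact Q.zero_mem
  have h := Ideal.height_le_height_add_one_of_mem hf
  rwa [Ideal.map_comap_of_surjective _ Ideal.Quotient.mk_surjective] at h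


open MvPowerSeries in
/-- Let `R` be the quotient of `K[[x, u_1, …, u_n, α]]` (with `x` indexed by `Sum.inr false`,
`α` by `Sum.inr true` and `u_i` by `Sum.inl i`) by the ideal `(α·x − ∏_{i∈A} u_i)`, for a
nonempty `A ⊆ {1,…,n}`. For every `j`, the ideal of `R` generated by the residue classes
of `x` and `u_j` has height 1 if and only if `j ∈ A`. -/
theorem height_ideal_blowup_chart {K : Type*} [Field K] (n : ℕ) (hn : 1 ≤ n)
    (A : Finset (Fin n)) (hA : A.Nonempty) (j : Fin n) :
    idealHeight (Ideal.span
      {Ideal.Quotient.mk (Ideal.span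
          {(X (Sum.inr true) : MvPowerSeries (Fin n ⊕ Bool) K) * X (Sum.inr false) -
            ∏ i ∈ A, X (Sum.inl i)})
          (X (Sum.inr false)),
       Ideal.Quotient.mk (Ideal.span
          {(X (Sum.inr true) : MvPowerSeries (Fin n ⊕ Bool) K) * X (Sum.inr false) -
            ∏ i ∈ A, X (Sum.inl i)})
          (X (Sum.inl j))}) = 1 ↔ j ∈ A := by
  set f : MvPowerSeries (Fin n ⊕ Bool) K :=
    X (Sum.inr true) * X (Sum.inr false) - ∏ i ∈ A, X (Sum.inl i) with hf
  set I := Ideal.span {Ideal.Quotient.mk (Ideal.span {f}) (X (Sum.inr false)),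
    Ideal.Quotient.mk (Ideal.span {f}) (X (Sum.inl j))} with hI
  have hcontr : ∀ Q : PrimeSpectrum (MvPowerSeries (Fin n ⊕ Bool) K ⧸ Ideal.span {f}),
      I ≤ Q.asIdeal → Ideal.Quotient.mk (Ideal.span {f}) (X (Sum.inr false)) ∈ Q.asIdeal ∧
        Ideal.Quotient.mk (Ideal.span {f}) (X (Sum.inl j)) ∈ Q.asIdeal := fun Q hQ =>
    ⟨hQ (Ideal.subset_span (by simp)), hQ (Ideal.subset_span (by simp))⟩
  -- primes of the quotient containing `x` contain some `u_i`
  have hex : ∀ Q : Ideal (MvPowerSeries (Fin n ⊕ Bool) K ⧸ Ideal.span {f}), Q.IsPrime →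
      Ideal.Quotient.mk (Ideal.span {f}) (X (Sum.inr false)) ∈ Q →
      ∃ i ∈ A, Ideal.Quotient.mk (Ideal.span {f}) (X (Sum.inl i)) ∈ Q := by
    intro Q hQ hx
    have h0 : Ideal.Quotient.mk (Ideal.span {f}) f = 0 :=
      Ideal.Quotient.eq_zero_iff_mem.mpr (Ideal.mem_span_singleton_self f)
    have h1 : ∏ i ∈ A, Ideal.Quotient.mk (Ideal.span {f}) (X (Sum.inl i)) =
        Ideal.Quotient.mk (Ideal.span {f}) (X (Sum.inr true)) *
          Ideal.Quotient.mk (Ideal.span {f}) (X (Sum.inr false)) := by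
      rw [← map_prod, ← map_mul]
      have : (∏ i ∈ A, X (Sum.inl i) : MvPowerSeries (Fin n ⊕ Bool) K) =
        X (Sum.inr true) * X (Sum.inr false) - f := by rw [hf]; ring
      rw [this, map_sub, h0, sub_zero]
    have h2 : ∏ i ∈ A, Ideal.Quotient.mk (Ideal.span {f}) (X (Sum.inl i)) ∈ Q := by
      rw [h1]; exact Q.mul_mem_left _ hx
    exact (Ideal.IsPrime.prod_mem_iff).mp h2
  have hlow : ∀ Q : PrimeSpectrum (MvPowerSeries (Fin n ⊕ Bool) K ⧸ Ideal.span {f}),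
      (Q.asIdeal.comap (Ideal.Quotient.mk (Ideal.span {f}))).height ≤ Order.height Q + 1 := by
    intro Q
    rw [← PrimeSpectrum.height_eq_orderHeight]
    exact chart_comap_height f Q.asIdeal
  constructor
  · intro h1
    by_contra hj
    have h2 : (2 : ℕ∞) ≤ idealHeight I := by
      refine le_iInf₂ fun Q hQ => ?_
      obtain ⟨hx, hu⟩ := hcontr Q hQ
      obtain ⟨i, hi, hui⟩ := hex Q.asIdeal Q.isPrime hx
      have hij : i ≠ j := by rintro rfl; exact hj hi
      have h3 := (chart_height_three (K := K) (a := Sum.inr false) (b := Sum.inl j)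
        (c := Sum.inl i) (by simp) (by simp) (by simpa using hij)
        (Q.asIdeal.comap (Ideal.Quotient.mk (Ideal.span {f}))) hx hu hui).trans (hlow Q)
      have h4 : (2 : ℕ∞) + 1 ≤ Order.height Q + 1 := by
        refine le_trans (le_of_eq (by norm_num)) h3
      exact (ENat.add_le_add_iff_right (by simp)).mp h4
    rw [h1] at h2
    exact absurd h2 (by norm_num)
  · intro hj
    apply le_antisymm
    · -- the prime ideal `(x, u_j)`
      have hP := chart_isPrime (K := K) (Sum.inr false : Fin n ⊕ Bool) (Sum.inl j)
      have hfP : f ∈ Ideal.span {(X (Sum.inr false) : MvPowerSeries (Fin n ⊕ Bool) K),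
          X (Sum.inl j)} := by
        refine Ideal.sub_mem _ (Ideal.mul_mem_left _ _ (Ideal.subset_span (by simp))) ?_
        exact Ideal.mem_of_dvd _ (Finset.dvd_prod_of_mem _ hj) (Ideal.subset_span (by simp))
      have hker : Ideal.span {f} ≤ Ideal.span {(X (Sum.inr false) :
          MvPowerSeries (Fin n ⊕ Bool) K), X (Sum.inl j)} := by
        rwa [Ideal.span_singleton_le_iff_mem]
      have hmap : (Ideal.span {(X (Sum.inr false) : MvPowerSeries (Fin n ⊕ Bool) K),
          X (Sum.inl j)}).map (Ideal.Quotient.mk (Ideal.span {f})) = I := by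
        rw [Ideal.map_span, Set.image_pair]
      have hIp : I.IsPrime := by
        rw [← hmap]
        exact Ideal.map_isPrime_of_surjective Ideal.Quotient.mk_surjective
          (by rwa [Ideal.mk_ker])
      have hcomap : I.comap (Ideal.Quotient.mk (Ideal.span {f})) =
          Ideal.span {(X (Sum.inr false) : MvPowerSeries (Fin n ⊕ Bool) K), X (Sum.inl j)} := by
        rw [← hmap, Ideal.comap_map_of_surjective' _ Ideal.Quotient.mk_surjective, Ideal.mk_ker]
        exact sup_eq_left.mpr hker
      have hmin : I ∈ (Ideal.span
          {Ideal.Quotient.mk (Ideal.span {f}) (X (Sum.inr false))}).minimalPrimes := by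
        refine ⟨⟨hIp, ?_⟩, ?_⟩
        · rw [Ideal.span_singleton_le_iff_mem]
          exact Ideal.subset_span (by simp)
        · rintro Q ⟨hQ, hxQ⟩ hQI
          rw [Ideal.span_singleton_le_iff_mem] at hxQ
          obtain ⟨i, hi, hui⟩ := hex Q hQ hxQ
          have h1 : (X (Sum.inl i) : MvPowerSeries (Fin n ⊕ Bool) K) ∈
              I.comap (Ideal.Quotient.mk (Ideal.span {f})) := hQI hui
          rw [hcomap] at h1
          have hij : i = j := by simpa using chart_mem h1
          subst hij
          rw [hI, Ideal.span_le]
          rintro g (rfl | rfl)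
          · exact hxQ
          · exact hui
      have hle := Ideal.height_le_one_of_isPrincipal_of_mem_minimalPrimes _ I hmin
      refine (iInf₂_le (⟨I, hIp⟩ : PrimeSpectrum _) le_rfl).trans ?_
      rw [← PrimeSpectrum.height_eq_orderHeight]
      exact hle
    · refine le_iInf₂ fun Q hQ => ?_
      obtain ⟨hx, hu⟩ := hcontr Q hQ
      have h3 := (chart_height_two (K := K) (a := Sum.inr false) (b := Sum.inl j) (by simp)
        (Q.asIdeal.comap (Ideal.Quotient.mk (Ideal.span {f}))) hx hu).trans (hlow Q)
      have h4 : (1 : ℕ∞) + 1 ≤ Order.height Q + 1 := by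
        refine le_trans (le_of_eq (by norm_num)) h3
      exact (ENat.add_le_add_iff_right (by simp)).mp h4
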